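/- arXiv:0805.2752 — 2 statements merged into one kernel-verified Lean document; each statement's English description precedes it below -/
import Mathlib

section
/- Let 0 < ε ≤ 1, b > 0, and let a : ℕ → E be an ℓ-margitron run of length T. Then T ≤ ((1/ε)·A + B^(1/ε))·(ln((1/ε)·A + B^(1/ε)))^(1−ε), where A = (2 + ε − 2·⌊ε⌋)·R²/γ_d² and B = (1+ε)·b/γ_d^(1+ε), and ⌊ε⌋ is the integer part of ε. -/
open scoped RealInnerProductSpace

lemma aux_eps (ε : ℝ) (h0 : 0 < ε) (h1 : ε ≤ 1) : 1 / 3 ≤ ε ^ (1 - (1 - ε) ^ 2) := by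
  have h2 : ε ^ (2 * ε) ≤ ε ^ (1 - (1 - ε) ^ 2) :=
    Real.rpow_le_rpow_of_exponent_ge h0 h1 (by nlinarith)
  refine le_trans ?_ h2
  rw [Real.rpow_def_of_pos h0]
  have hs : 0 < Real.sqrt ε := Real.sqrt_pos.mpr h0
  have hss : Real.sqrt ε * Real.sqrt ε = ε := Real.mul_self_sqrt h0.le
  have hl : Real.log ε = 2 * Real.log (Real.sqrt ε) := by
    rw [Real.log_sqrt h0.le]; ring
  have hl2 : 1 - (Real.sqrt ε)⁻¹ ≤ Real.log (Real.sqrt ε) :=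
    Real.one_sub_inv_le_log_of_pos hs
  have h3 : ε * (1 - (Real.sqrt ε)⁻¹) ≤ ε * Real.log (Real.sqrt ε) :=
    mul_le_mul_of_nonneg_left hl2 h0.le
  have h4 : ε * (1 - (Real.sqrt ε)⁻¹) = ε - Real.sqrt ε := by
    have : ε * (Real.sqrt ε)⁻¹ = Real.sqrt ε := by
      nth_rewrite 1 [← hss]; field_simp
    rw [mul_sub, this, mul_one]
  have h5 : -1 ≤ Real.log ε * (2 * ε) := by
    rw [hl]; nlinarith [sq_nonneg (Real.sqrt ε - 1 / 2)]
  refine le_trans ?_ (Real.exp_le_exp.mpr h5)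
  rw [Real.exp_neg, one_div]
  exact inv_anti₀ (Real.exp_pos 1) (by linarith [Real.exp_one_lt_d9])

lemma aux_key (ε l K : ℝ) (h0 : 0 < ε) (h1 : ε < 1) (hl : 1 ≤ l) (hK : K ≤ l)
    (hK2 : K ≤ 1 / ε) (hK0 : 0 ≤ K) :
    (3 + ε) / 2 + K * (1 - 2 * ε - ε ^ 2) / 2 ≤ (2 + ε) * l ^ ((1 - ε) ^ 2) := by
  set s := (1 - ε) ^ 2 with hs
  have hs0 : 0 ≤ s := sq_nonneg _
  have hs1 : s ≤ 1 := by nlinarith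
  have hls : 1 ≤ l ^ s := Real.one_le_rpow hl hs0
  by_cases hneg : 1 - 2 * ε - ε ^ 2 ≤ 0
  · nlinarith
  push Not at hneg
  have hinv : 1 < 1 / ε := by rw [lt_div_iff₀ h0]; linarith
  have e1 : (1 / ε) ^ s = 1 / ε * ε ^ (1 - s) := by
    rw [Real.rpow_sub h0, Real.rpow_one, Real.div_rpow zero_le_one h0.le, Real.one_rpow]
    field_simp
  have e2 := aux_eps ε h0 h1.le
  have e3 : 1 / ε * (1 / 3) ≤ (1 / ε) ^ s := by
    rw [e1]; exact mul_le_mul_of_nonneg_left e2 (by linarith)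
  have hEε : 1 / ε * ε = 1 := by field_simp
  generalize hE : 1 / ε = I at *
  -- endpoint
  have e4 : (3 + ε) / 2 + I * (1 - 2 * ε - ε ^ 2) / 2 ≤ (2 + ε) * I ^ s := by
    have : (2 + ε) * (I * (1 / 3)) ≤ (2 + ε) * I ^ s :=
      mul_le_mul_of_nonneg_left e3 (by linarith)
    have h : I * ε ^ 2 = ε := by rw [pow_two, ← mul_assoc, hEε, one_mul]
    nlinarith
  rcases le_total I l with h | h
  · have : I ^ s ≤ l ^ s := Real.rpow_le_rpow (by linarith) h hs0
    nlinarith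
  · have hII : (1 : ℝ) ∈ Set.Ici (0 : ℝ) := by simp
    have hII2 : I ∈ Set.Ici (0 : ℝ) := by simp; linarith
    have hA0 : 0 ≤ (I - l) / (I - 1) := div_nonneg (by linarith) (by linarith)
    have hB0 : 0 ≤ (l - 1) / (I - 1) := div_nonneg (by linarith) (by linarith)
    have hAB : (I - l) / (I - 1) + (l - 1) / (I - 1) = 1 := by
      rw [← add_div, div_eq_one_iff_eq (by linarith)]; ring
    have hcc := Real.concaveOn_rpow hs0 hs1
    have hc := hcc.2 hII hII2 hA0 hB0 hAB
    have hw : (I - l) / (I - 1) = 1 - (l - 1) / (I - 1) := by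
      have : I - 1 ≠ 0 := by linarith
      field_simp; ring
    have hw1 : (l - 1) / (I - 1) * (I - 1) = l - 1 := by
      have : I - 1 ≠ 0 := by linarith
      field_simp
    have hw0 : 0 ≤ (l - 1) / (I - 1) := div_nonneg (by linarith) (by linarith)
    have hw2 : (l - 1) / (I - 1) ≤ 1 := by rw [div_le_one (by linarith)]; linarith
    simp only [smul_eq_mul, Real.one_rpow, hw] at hc
    generalize (l - 1) / (I - 1) = w at *
    have hl' : (1 - w) * 1 + w * I = l := by linarith
    rw [hl'] at hc
    have a1 : w * ((3 + ε) / 2 + I * (1 - 2 * ε - ε ^ 2) / 2) ≤ w * ((2 + ε) * I ^ s) :=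
      mul_le_mul_of_nonneg_left e4 hw0
    have a2 : (1 - w) * ((3 + ε) / 2 + (1 - 2 * ε - ε ^ 2) / 2) ≤ (1 - w) * (2 + ε) :=
      mul_le_mul_of_nonneg_left (by nlinarith) (by linarith)
    have a3 : K * (1 - 2 * ε - ε ^ 2) ≤ l * (1 - 2 * ε - ε ^ 2) :=
      mul_le_mul_of_nonneg_right hK hneg.le
    have a4 : (2 + ε) * ((1 - w) * 1 + w * I ^ s) ≤ (2 + ε) * l ^ s :=
      mul_le_mul_of_nonneg_left hc (by linarith)
    have a5 : l * (1 - 2 * ε - ε ^ 2) = (1 - w) * (1 - 2 * ε - ε ^ 2)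
      + w * I * (1 - 2 * ε - ε ^ 2) := by rw [← hl']; ring
    linarith

lemma aux_real (ε ρ B T : ℝ) (h0 : 0 < ε) (h1 : ε < 1) (hρ : 1 ≤ ρ) (hB : 0 < B) (hT : 1 ≤ T)
    (h : T ^ (1 + ε) ≤ ρ + B * T + (1 + ε) / 2 * ρ * (1 + (T ^ ε - 1) / ε)) :
    T ≤ ((1 / ε) * ((2 + ε) * ρ) + B ^ (1 / ε)) *
      (Real.log ((1 / ε) * ((2 + ε) * ρ) + B ^ (1 / ε))) ^ (1 - ε) := by
  by_contra hcon
  push Not at hcon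
  have hD : 0 < B ^ (1 / ε) := Real.rpow_pos_of_pos hB _
  have hDε : (B ^ (1 / ε)) ^ ε = B := by
    rw [← Real.rpow_mul hB.le, one_div_mul_cancel h0.ne', Real.rpow_one]
  set D := B ^ (1 / ε) with hDdef
  set M := (1 / ε) * ((2 + ε) * ρ) + D with hM
  have hI : 1 ≤ 1 / ε := by rw [le_div_iff₀ h0]; linarith
  have hMeε : ε * (M - D) = (2 + ε) * ρ := by rw [hM]; field_simp; ring
  have hM3 : 3 ≤ M := by
    have : (2 + ε) ≤ ε * (M - D) := by rw [hMeε]; nlinarith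
    have h3 : 2 + ε ≤ ε * M := by nlinarith
    by_contra hlt
    push Not at hlt
    nlinarith
  have hM0 : 0 < M := by linarith
  have hT0 : 0 < T := by linarith
  set l := Real.log M with hl
  have hl1 : 1 ≤ l := by
    rw [hl, Real.le_log_iff_exp_le hM0]; linarith [Real.exp_one_lt_d9]
  have hl2 : 1 ≤ l ^ (1 - ε) := Real.one_le_rpow hl1 (by linarith)
  set τ := T / M with hτ
  have hTτ : T = M * τ := by rw [hτ]; field_simp
  have hτl : l ^ (1 - ε) < τ := by
    rw [hτ, lt_div_iff₀ hM0]; linarith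
  have hτ1 : 1 < τ := by linarith
  have hτ0 : 0 < τ := by linarith
  have hm0 : 0 < M ^ (-ε) := Real.rpow_pos_of_pos hM0 _
  have hm1 : M ^ (-ε) ≤ 1 := Real.rpow_le_one_of_one_le_of_nonpos (by linarith) (by linarith)
  have hr0 : 0 < τ ^ (-ε) := Real.rpow_pos_of_pos hτ0 _
  have hr1 : τ ^ (-ε) < 1 := Real.rpow_lt_one_of_one_lt_of_neg hτ1 (by linarith)
  have hq : T ^ (-ε) = M ^ (-ε) * τ ^ (-ε) := by rw [hTτ, Real.mul_rpow hM0.le hτ0.le]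
  have hrτ : τ ^ (1 - ε) = τ * τ ^ (-ε) := by
    rw [sub_eq_add_neg, Real.rpow_add hτ0, Real.rpow_one]
  have hrl : l ^ ((1 - ε) ^ 2) ≤ τ * τ ^ (-ε) := by
    rw [← hrτ, pow_two, Real.rpow_mul (by linarith)]
    exact Real.rpow_le_rpow (by linarith) hτl.le (by linarith)
  -- K
  have hml : 1 - ε * l ≤ M ^ (-ε) := by
    rw [Real.rpow_def_of_pos hM0, ← hl]
    have := Real.add_one_le_exp (l * -ε)
    linarith
  have hkey := aux_key ε l ((1 - M ^ (-ε)) / ε) h0 h1 hl1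
    (by rw [div_le_iff₀ h0]; linarith) (by gcongr; linarith)
    (div_nonneg (by linarith) h0.le)
  -- Bernoulli
  have hBm : M * (B * M ^ (-ε)) ≤ M - (2 + ε) * ρ := by
    have hb := rpow_one_add_le_one_add_mul_self (s := D / M - 1) (p := ε)
      (by have : 0 ≤ D / M := by positivity
          linarith) h0.le h1.le
    have e : (1 + (D / M - 1)) ^ ε = B * M ^ (-ε) := by
      rw [add_sub_cancel, Real.div_rpow hD.le hM0.le, hDε, Real.rpow_neg hM0.le, div_eq_mul_inv]
    rw [e] at hb
    have := mul_le_mul_of_nonneg_left hb hM0.le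
    have e2 : M * (1 + ε * (D / M - 1)) = M - ε * (M - D) := by field_simp; ring
    rw [e2, hMeε] at this
    exact this
  -- divide by T^ε
  have hTq : T ^ (-ε) * T ^ ε = 1 := by
    rw [← Real.rpow_add hT0]; simp
  have hTT : T ^ (-ε) * T ^ (1 + ε) = T := by
    rw [← Real.rpow_add hT0]; simp
  have hdiv := mul_le_mul_of_nonneg_left h (Real.rpow_pos_of_pos hT0 (-ε)).le
  rw [hTT] at hdiv
  have e3 : T ^ (-ε) * (ρ + B * T + (1 + ε) / 2 * ρ * (1 + (T ^ ε - 1) / ε))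
      = T ^ (-ε) * (ρ + B * T) + (1 + ε) / 2 * ρ * (T ^ (-ε) + (1 - T ^ (-ε)) / ε) := by
    have : T ^ (-ε) * ((T ^ ε - 1) / ε) = (1 - T ^ (-ε)) / ε := by
      rw [← mul_div_assoc, mul_sub, hTq, mul_one]
    rw [← this]; ring
  rw [e3, hq] at hdiv
  clear_value M l D τ
  clear hTq hTT e3 hq hrτ hml hcon h hτl hl2
  generalize M ^ (-ε) = m at *
  generalize τ ^ (-ε) = r at *
  have g1 : m * r * (B * T) ≤ (M - (2 + ε) * ρ) * (r * τ) := by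
    have : m * r * (B * T) = (M * (B * m)) * (r * τ) := by rw [hTτ]; ring
    rw [this]
    exact mul_le_mul_of_nonneg_right hBm (by positivity)
  have e5 : (1 - m * r) / ε = (1 - m) / ε + m * (1 - r) / ε := by ring
  rw [e5] at hdiv
  have g2 : (1 + ε) / 2 * ρ * (m * (1 - r) / ε) < M * τ * (1 - r) := by
    have hMl : ρ / ε < M := by
      rw [div_lt_iff₀ h0]; nlinarith
    have h1r : 0 < 1 - r := by linarith
    have : (1 + ε) / 2 * ρ * (m * (1 - r) / ε) = ((1 + ε) / 2 * m) * (ρ / ε) * (1 - r) := by ring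
    rw [this]
    apply mul_lt_mul_of_pos_right _ h1r
    have hρε : 0 < ρ / ε := by positivity
    have k1 : (1 + ε) / 2 * m ≤ 1 := mul_le_one₀ (by linarith) hm0.le hm1
    have k2 : (1 + ε) / 2 * m * (ρ / ε) ≤ 1 * (ρ / ε) :=
      mul_le_mul_of_nonneg_right k1 hρε.le
    have k3 : M * 1 ≤ M * τ := mul_le_mul_of_nonneg_left hτ1.le hM0.le
    linarith
  have g3 : m * r ≤ m := by nlinarith
  have g4 : (2 + ε) * ρ * (r * τ) < (3 + ε) / 2 * ρ * (m * r) + (1 + ε) / 2 * ρ * ((1 - m) / ε) := by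
    have hT' : T = M * τ := hTτ
    have : T = M * τ * (1 - r) + M * (r * τ) := by rw [hTτ]; ring
    linarith
  have g5 : (2 + ε) * (r * τ) < (3 + ε) / 2 * m + (1 + ε) / 2 * ((1 - m) / ε) := by
    have : (3 + ε) / 2 * ρ * (m * r) ≤ (3 + ε) / 2 * ρ * m :=
      mul_le_mul_of_nonneg_left g3 (by positivity)
    have hh : ρ * ((2 + ε) * (r * τ)) < ρ * ((3 + ε) / 2 * m + (1 + ε) / 2 * ((1 - m) / ε)) := by
      linarith
    exact lt_of_mul_lt_mul_left hh (by linarith)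
  have g6 : (2 + ε) * l ^ ((1 - ε) ^ 2) ≤ (2 + ε) * (r * τ) :=
    mul_le_mul_of_nonneg_left (by linarith) (by linarith)
  have g7 : (3 + ε) / 2 + (1 - m) / ε * (1 - 2 * ε - ε ^ 2) / 2
      = (3 + ε) / 2 * m + (1 + ε) / 2 * ((1 - m) / ε) := by
    field_simp; ring
  linarith

lemma aux_sum (ε : ℝ) (h0 : 0 < ε) (h1 : ε ≤ 1) (t : ℕ) :
    ∑ j ∈ Finset.range (t + 1), ((j : ℝ) + 1) ^ (ε - 1) ≤ 1 + (((t : ℝ) + 1) ^ ε - 1) / ε := by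
  induction t with
  | zero => simp
  | succ t ih =>
    rw [Finset.sum_range_succ]
    push_cast
    set z : ℝ := (t : ℝ) + 1 + 1 with hz
    have hz0 : 0 < z := by positivity
    have hz1 : 1 ≤ z := by
      have : (0 : ℝ) ≤ t := Nat.cast_nonneg t
      linarith
    have hb := rpow_one_add_le_one_add_mul_self (s := -1 / z) (p := ε)
      (by rw [neg_div, neg_le_neg_iff, div_le_one hz0]; exact hz1) h0.le h1
    have e : (t : ℝ) + 1 = z * (1 + -1 / z) := by field_simp; ring
    have hnn : 0 ≤ 1 + -1 / z := by
      have : 1 / z ≤ 1 := by rw [div_le_one hz0]; exact hz1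
      rw [neg_div]; linarith
    have e2 : ((t : ℝ) + 1) ^ ε = z ^ ε * (1 + -1 / z) ^ ε := by
      rw [e, Real.mul_rpow hz0.le hnn]
    have e3 : z ^ (ε - 1) = z ^ ε / z := by rw [Real.rpow_sub hz0, Real.rpow_one]
    have hzε : 0 < z ^ ε := Real.rpow_pos_of_pos hz0 _
    have h4 : ((t : ℝ) + 1) ^ ε ≤ z ^ ε - ε * (z ^ ε / z) := by
      rw [e2]
      calc _ ≤ z ^ ε * (1 + ε * (-1 / z)) := mul_le_mul_of_nonneg_left hb hzε.le
        _ = _ := by ring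
    have h5 : (((t : ℝ) + 1) ^ ε - 1) / ε ≤ (z ^ ε - 1) / ε - z ^ ε / z := by
      rw [div_le_iff₀ h0, sub_mul, div_mul_cancel₀ _ h0.ne']
      linarith
    rw [e3]
    linarith

lemma aux_step (ε ρ β x x' : ℝ) (h0 : 0 < ε) (h1 : ε ≤ 1) (hρ : 0 ≤ ρ) (hβ : 0 ≤ β)
    (hx : 0 < x) (hx' : 0 ≤ x') (h : x' ^ 2 ≤ x ^ 2 + ρ + 2 * β * x ^ (1 - ε)) :
    x' ^ (1 + ε) ≤ x ^ (1 + ε) + (1 + ε) * β + (1 + ε) / 2 * ρ * x ^ (ε - 1) := by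
  have hsq : ∀ z : ℝ, 0 ≤ z → z ^ (1 + ε) = (z ^ 2) ^ ((1 + ε) / 2) := by
    intro z hz
    rw [← Real.rpow_natCast, ← Real.rpow_mul hz]
    congr 1; push_cast; ring
  have hw : 0 < x ^ (1 - ε) := Real.rpow_pos_of_pos hx _
  set δ := (ρ + 2 * β * x ^ (1 - ε)) / x ^ 2 with hδ
  have hδ0 : 0 ≤ δ := by positivity
  have e : x ^ 2 + ρ + 2 * β * x ^ (1 - ε) = x ^ 2 * (1 + δ) := by rw [hδ]; field_simp; ring
  have hb := rpow_one_add_le_one_add_mul_self (s := δ) (p := (1 + ε) / 2)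
      (by linarith) (by linarith) (by linarith)
  have hp : 0 < x ^ (1 + ε) := Real.rpow_pos_of_pos hx _
  have e1 : x ^ (1 + ε) / x ^ 2 = x ^ (ε - 1) := by
    rw [← Real.rpow_natCast, ← Real.rpow_sub hx]
    congr 1; push_cast; ring
  have e2 : x ^ (ε - 1) * x ^ (1 - ε) = 1 := by
    rw [← Real.rpow_add hx]; simp
  calc x' ^ (1 + ε) = (x' ^ 2) ^ ((1 + ε) / 2) := hsq _ hx'
    _ ≤ (x ^ 2 * (1 + δ)) ^ ((1 + ε) / 2) := by
        rw [← e]; exact Real.rpow_le_rpow (sq_nonneg _) h (by linarith)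
    _ = x ^ (1 + ε) * (1 + δ) ^ ((1 + ε) / 2) := by
        rw [Real.mul_rpow (sq_nonneg _) (by linarith), ← hsq _ hx.le]
    _ ≤ x ^ (1 + ε) * (1 + (1 + ε) / 2 * δ) := mul_le_mul_of_nonneg_left hb hp.le
    _ = x ^ (1 + ε) + (1 + ε) / 2 * (x ^ (1 + ε) / x ^ 2) * (ρ + 2 * β * x ^ (1 - ε)) := by
        rw [hδ]; ring
    _ = x ^ (1 + ε) + (1 + ε) * β * (x ^ (ε - 1) * x ^ (1 - ε))
          + (1 + ε) / 2 * ρ * x ^ (ε - 1) := by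
        rw [e1]; ring
    _ = _ := by rw [e2]; ring

lemma aux_seq (ε ρ β : ℝ) (h0 : 0 < ε) (h1 : ε ≤ 1) (hρ : 1 ≤ ρ) (hβ : 0 ≤ β) (T : ℕ)
    (x : ℕ → ℝ) (hx : ∀ t, t ≤ T → (t : ℝ) ≤ x t) (hx1 : 1 ≤ T → x 1 ^ 2 ≤ ρ)
    (hs : ∀ t, 1 ≤ t → t < T → x (t + 1) ^ 2 ≤ x t ^ 2 + ρ + 2 * β * x t ^ (1 - ε)) (t : ℕ)
    (ht : t + 1 ≤ T) :
    x (t + 1) ^ (1 + ε) ≤ ρ + (1 + ε) * β * t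
      + (1 + ε) / 2 * ρ * ∑ j ∈ Finset.range t, ((j : ℝ) + 1) ^ (ε - 1) := by
  induction t with
  | zero =>
    have hx0 : (1 : ℝ) ≤ x 1 := by simpa using hx 1 ht
    have : x 1 ^ (1 + ε) ≤ x 1 ^ (2 : ℝ) :=
      Real.rpow_le_rpow_of_exponent_le hx0 (by linarith)
    rw [Real.rpow_two] at this
    have := hx1 ht
    simp
    linarith
  | succ t ih =>
    have ih := ih (by omega)
    have hxt := hx (t + 1) (by omega)
    have hxt' := hx (t + 1 + 1) (by omega)
    push_cast at hxt hxt'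
    have htn : (0 : ℝ) ≤ t := Nat.cast_nonneg t
    have := aux_step ε ρ β (x (t + 1)) (x (t + 1 + 1)) h0 h1 (by linarith) hβ (by linarith)
      (by linarith) (hs (t + 1) (by omega) (by omega))
    have h2 : x (t + 1) ^ (ε - 1) ≤ ((t : ℝ) + 1) ^ (ε - 1) :=
      Real.rpow_le_rpow_of_nonpos (by linarith) hxt (by linarith)
    have h3 := mul_le_mul_of_nonneg_left h2 (show 0 ≤ (1 + ε) / 2 * ρ by positivity)
    rw [Finset.sum_range_succ]
    push_cast
    linarith

/-- an ℓ-margitron run of length T with 0 < ε ≤ 1 satisfies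
T ≤ ((1/ε)·A + B^(1/ε))·(ln((1/ε)·A + B^(1/ε)))^(1−ε) with
A = (2+ε−2⌊ε⌋)·R²/γ_d², B = (1+ε)·b/γ_d^(1+ε). -/
theorem stmt11 {E : Type*} [NormedAddCommGroup E] [InnerProductSpace ℝ E]
    {n : ℕ} (hn : 0 < n) (y : Fin n → E)
    (R : ℝ) (hR : IsGreatest (Set.range (fun k : Fin n => ‖y k‖)) R)
    (u : E) (hu : ‖u‖ = 1) (γd : ℝ) (hγd : 0 < γd)
    (hmargin : ∀ k : Fin n, γd ≤ ⟪u, y k⟫)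
    (ε b : ℝ) (hε : 0 < ε) (hε1 : ε ≤ 1) (hb : 0 < b)
    (T : ℕ) (a : ℕ → E) (ha0 : a 0 = 0)
    (hrun : ∀ t : ℕ, t < T → ∃ k : Fin n, a (t + 1) = a t + y k ∧
      ⟪a t, y k⟫ ≤ if t = 0 then 0 else b * ‖a t‖ ^ (1 - ε))
    (A B : ℝ)
    (hA : A = (2 + ε - 2 * (⌊ε⌋ : ℝ)) * (R ^ 2 / γd ^ 2))
    (hB : B = (1 + ε) * b / γd ^ (1 + ε)) :
    (T : ℝ) ≤ ((1 / ε) * A + B ^ (1 / ε)) *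
      (Real.log ((1 / ε) * A + B ^ (1 / ε))) ^ (1 - ε) := by
  have hε0 := hε
  obtain ⟨⟨k0, hk0⟩, hRub⟩ := hR
  have hRk : ∀ k, ‖y k‖ ≤ R := fun k => hRub ⟨k, rfl⟩
  have hγR : γd ≤ R := by
    have h1 := hmargin k0
    have h2 := real_inner_le_norm u (y k0)
    rw [hu, one_mul] at h2
    linarith [hRk k0]
  set ρ := R ^ 2 / γd ^ 2 with hρdef
  have hρ : 1 ≤ ρ := by
    rw [hρdef, one_le_div (by positivity)]
    exact pow_le_pow_left₀ hγd.le hγR 2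
  set β := b / γd ^ (1 + ε) with hβdef
  have hγp : 0 < γd ^ (1 + ε) := Real.rpow_pos_of_pos hγd _
  have hβ : 0 < β := by positivity
  have hBβ : B = (1 + ε) * β := by rw [hB, hβdef]; ring
  have hB0 : 0 < B := by rw [hBβ]; positivity
  -- lower bound
  have hlow : ∀ t, t ≤ T → (t : ℝ) * γd ≤ ⟪u, a t⟫ := by
    intro t
    induction t with
    | zero => intro _; simp [ha0]
    | succ t ih =>
      intro ht
      obtain ⟨k, hk, -⟩ := hrun t (by omega)
      rw [hk, inner_add_right]
      push_cast
      linarith [ih (by omega), hmargin k]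
  have hx : ∀ t, t ≤ T → (t : ℝ) ≤ ‖a t‖ / γd := by
    intro t ht
    rw [le_div_iff₀ hγd]
    have h2 := real_inner_le_norm u (a t)
    rw [hu, one_mul] at h2
    linarith [hlow t ht]
  have hup : ∀ t k, a (t + 1) = a t + y k →
      ‖a (t + 1)‖ ^ 2 ≤ ‖a t‖ ^ 2 + 2 * ⟪a t, y k⟫ + R ^ 2 := by
    intro t k hk
    rw [hk, norm_add_sq_real]
    have := pow_le_pow_left₀ (norm_nonneg _) (hRk k) 2
    linarith
  have hx1 : 1 ≤ T → (‖a 1‖ / γd) ^ 2 ≤ ρ := by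
    intro hT
    obtain ⟨k, hk, hm⟩ := hrun 0 (by omega)
    have := hup 0 k hk
    rw [div_pow, hρdef]
    gcongr ?_ / _
    simpa [ha0] using this
  have hs : ∀ t, 1 ≤ t → t < T → (‖a (t + 1)‖ / γd) ^ 2 ≤
      (‖a t‖ / γd) ^ 2 + ρ + 2 * β * (‖a t‖ / γd) ^ (1 - ε) := by
    intro t ht htT
    obtain ⟨k, hk, hm⟩ := hrun t htT
    rw [if_neg (by omega)] at hm
    have h1 := hup t k hk
    have e : β * (‖a t‖ / γd) ^ (1 - ε) = b * ‖a t‖ ^ (1 - ε) / γd ^ 2 := by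
      rw [Real.div_rpow (norm_nonneg _) hγd.le, hβdef, div_mul_div_comm, ← Real.rpow_add hγd]
      congr 1
      rw [← Real.rpow_natCast]
      congr 1; push_cast; ring
    rw [mul_assoc, e, hρdef, div_pow, div_pow]
    calc ‖a (t + 1)‖ ^ 2 / γd ^ 2
        ≤ (‖a t‖ ^ 2 + 2 * (b * ‖a t‖ ^ (1 - ε)) + R ^ 2) / γd ^ 2 := by
          gcongr; linarith
      _ = _ := by ring
  have hseq := aux_seq ε ρ β hε hε1 hρ hβ.le T (fun t => ‖a t‖ / γd) hx hx1 hs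
  have hD : 0 < B ^ (1 / ε) := Real.rpow_pos_of_pos hB0 _
  rcases Nat.eq_zero_or_pos T with hT | hT
  · have hA' : 0 ≤ A ∧ (ε < 1 → 2 ≤ A) := by
      rcases hε1.lt_or_eq with h | h
      · have hf : ⌊ε⌋ = 0 := by rw [Int.floor_eq_zero_iff]; exact ⟨hε.le, h⟩
        rw [hf] at hA
        norm_num at hA
        constructor
        · nlinarith
        · intro _; nlinarith
      · subst h
        norm_num at hA
        exact ⟨by linarith, fun h => absurd h (lt_irrefl _)⟩
    rw [hT, Nat.cast_zero]
    apply mul_nonneg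
    · have := hA'.1
      positivity
    · rcases hε1.lt_or_eq with h | h
      · apply Real.rpow_nonneg
        apply Real.log_nonneg
        have hI : 1 ≤ 1 / ε := by rw [le_div_iff₀ hε]; linarith
        nlinarith [hA'.2 h]
      · rw [h]; simp
  obtain ⟨t, rfl⟩ : ∃ t, T = t + 1 := ⟨T - 1, by omega⟩
  have h1 := hseq t le_rfl
  have hT1 : (1 : ℝ) ≤ ((t + 1 : ℕ) : ℝ) := by exact_mod_cast hT
  have h2 : ((t + 1 : ℕ) : ℝ) ^ (1 + ε) ≤ (‖a (t + 1)‖ / γd) ^ (1 + ε) :=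
    Real.rpow_le_rpow (by linarith) (hx (t + 1) le_rfl) (by linarith)
  have h3 := h2.trans h1
  rw [← hBβ] at h3
  rcases hε1.lt_or_eq with h | h
  · have hf : ⌊ε⌋ = 0 := by rw [Int.floor_eq_zero_iff]; exact ⟨hε.le, h⟩
    have hA2 : A = (2 + ε) * ρ := by rw [hA, hf]; simp
    rw [hA2]
    apply aux_real ε ρ B _ hε h hρ hB0 hT1
    have hsum := aux_sum ε hε hε1 t
    rw [Finset.sum_range_succ] at hsum
    have hpos : 0 ≤ ((t : ℝ) + 1) ^ (ε - 1) := by positivity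
    have h5 := mul_le_mul_of_nonneg_left (show ∑ j ∈ Finset.range t, ((j : ℝ) + 1) ^ (ε - 1) ≤
      1 + (((t : ℝ) + 1) ^ ε - 1) / ε by linarith) (show 0 ≤ (1 + ε) / 2 * ρ by positivity)
    push_cast at h3 ⊢
    nlinarith
  · subst h
    norm_num at hA h3 ⊢
    rw [hA]
    have : (0 : ℝ) ≤ t := Nat.cast_nonneg t
    have h6 : ((t : ℝ) + 1) * ((t : ℝ) + 1) ≤ (ρ + B) * ((t : ℝ) + 1) := by nlinarith
    exact le_of_mul_le_mul_right h6 (by linarith)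
end

section
/- Let 0 < ε ≤ 1 and δ > 0, and suppose the parameter b satisfies b/R^(1+ε) ≥ ((1+ε)^(3ε−1−⌊ε⌋)/(2εδ)^ε)·(γ_d/R)^(1−ε), where ⌊ε⌋ is the integer part of ε. If a : ℕ → E is an ℓ-margitron run of length t_c ≥ 1 that has converged after t_c updates, i.e. ⟨a_{t_c}, y_k⟩ > b·‖a_{t_c}‖^(1−ε) for every k ∈ {1, …, n}, then the achieved directional margin γ'_d := min_k ⟨a_{t_c}/‖a_{t_c}‖, y_k⟩ satisfies γ'_d/γ_d ≥ (δ + 1 + ε)^(−1). -/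
open scoped RealInnerProductSpace

/-- Elementary one-step concavity estimate. -/
lemma step_aux (x z R b ε : ℝ) (hx : 0 < x) (hz : 0 ≤ z) (hb : 0 < b) (hε : 0 < ε) (hε1 : ε ≤ 1)
    (h : z ^ 2 ≤ x ^ 2 + R ^ 2 + 2 * (b * x ^ (1 - ε))) :
    z ^ (1 + ε) ≤ x ^ (1 + ε) + (1 + ε) * b + (1 + ε) / 2 * R ^ 2 * x ^ (ε - 1) := by
  have hxp : 0 < x ^ (1 - ε) := Real.rpow_pos_of_pos hx _
  set s := (R ^ 2 + 2 * (b * x ^ (1 - ε))) / x ^ 2 with hs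
  have hs0 : 0 ≤ s := by positivity
  have h1 : z ^ 2 ≤ x ^ 2 * (1 + s) := by
    have : x ^ 2 * (1 + s) = x ^ 2 + R ^ 2 + 2 * (b * x ^ (1 - ε)) := by
      rw [hs]; field_simp; ring
    linarith
  have hpw : ∀ v : ℝ, 0 ≤ v → (v ^ 2) ^ ((1 + ε) / 2) = v ^ (1 + ε) := by
    intro v hv
    rw [← Real.rpow_natCast, ← Real.rpow_mul hv]
    congr 1; push_cast; ring
  have h2 : (1 + s) ^ ((1 + ε) / 2) ≤ 1 + (1 + ε) / 2 * s :=
    rpow_one_add_le_one_add_mul_self (by linarith) (by linarith) (by linarith)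
  have hA : x ^ (1 + ε) = x ^ 2 * x ^ (ε - 1) := by
    rw [← Real.rpow_natCast, ← Real.rpow_add hx]; congr 1; push_cast; ring
  have hB : x ^ (1 - ε) * x ^ (ε - 1) = 1 := by
    rw [← Real.rpow_add hx]; simp
  calc z ^ (1 + ε) = (z ^ 2) ^ ((1 + ε) / 2) := (hpw z hz).symm
    _ ≤ (x ^ 2 * (1 + s)) ^ ((1 + ε) / 2) :=
        Real.rpow_le_rpow (by positivity) h1 (by linarith)
    _ = x ^ (1 + ε) * (1 + s) ^ ((1 + ε) / 2) := by
        rw [Real.mul_rpow (by positivity) (by positivity), hpw x hx.le]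
    _ ≤ x ^ (1 + ε) * (1 + (1 + ε) / 2 * s) := by gcongr
    _ = x ^ (1 + ε) + (1 + ε) / 2 * ((x ^ 2 * s) * x ^ (ε - 1)) := by
        nth_rewrite 2 [hA]
        rw [mul_add, ← hA]; rw [hA]; ring
    _ = x ^ (1 + ε) + (1 + ε) / 2 * ((R ^ 2 + 2 * (b * x ^ (1 - ε))) * x ^ (ε - 1)) := by
        rw [hs, mul_div_cancel₀ _ (by positivity)]
    _ = x ^ (1 + ε) + (1 + ε) * b * (x ^ (1 - ε) * x ^ (ε - 1))
          + (1 + ε) / 2 * R ^ 2 * x ^ (ε - 1) := by ring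
    _ = _ := by rw [hB]; ring

/-- Telescoping estimate for `t^(ε-1)`. -/
lemma pow_aux (t ε : ℝ) (ht : 1 ≤ t) (hε : 0 < ε) (hε1 : ε ≤ 1) :
    ε * t ^ (ε - 1) ≤ t ^ ε - (t - 1) ^ ε := by
  have ht0 : 0 < t := by linarith
  have h1 : (1 + (-(1 / t))) ^ ε ≤ 1 + ε * (-(1 / t)) := by
    apply rpow_one_add_le_one_add_mul_self _ hε.le hε1
    have : 1 / t ≤ 1 := by rw [div_le_one ht0]; exact ht
    linarith
  have h0 : 0 ≤ 1 + (-(1 / t)) := by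
    have : 1 / t ≤ 1 := by rw [div_le_one ht0]; exact ht
    linarith
  have h2 : (t - 1) ^ ε = t ^ ε * (1 + (-(1 / t))) ^ ε := by
    rw [← Real.mul_rpow ht0.le h0]; congr 1; field_simp; ring
  have h3 : t ^ (ε - 1) = t ^ ε / t := by
    rw [Real.rpow_sub ht0, Real.rpow_one]
  have hp : 0 < t ^ ε := Real.rpow_pos_of_pos ht0 _
  have := mul_le_mul_of_nonneg_left h1 hp.le
  rw [h2, h3]
  have e : t ^ ε * (1 + ε * (-(1 / t))) = t ^ ε - ε * (t ^ ε / t) := by ring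
  linarith

/-- Growth bound. -/
lemma growth_aux (r : ℕ → ℝ) (R b ε γ : ℝ) (tc : ℕ) (hγ : 0 < γ) (hγR : γ ≤ R) (hb : 0 < b)
    (hε : 0 < ε) (hε1 : ε ≤ 1) (hr1 : r 1 ≤ R) (hlow : ∀ t ≤ tc, γ * t ≤ r t)
    (hstep : ∀ t, 1 ≤ t → t < tc → r (t + 1) ^ 2 ≤ r t ^ 2 + R ^ 2 + 2 * (b * r t ^ (1 - ε)))
    (htc : 1 ≤ tc) :
    r tc ^ (1 + ε) ≤ (1 + ε) * b * tc +
      R ^ 2 * γ ^ (ε - 1) * ((1 + ε) ^ 2 / (2 * ε)) * (tc : ℝ) ^ ε := by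
  set A := R ^ 2 * γ ^ (ε - 1) with hA
  have hR : 0 < R := by linarith
  have hA0 : 0 < A := by have := Real.rpow_pos_of_pos hγ (ε - 1); positivity
  have hr10 : 0 ≤ r 1 := by have := hlow 1 htc; simp at this; linarith
  have hb1 : r 1 ^ (1 + ε) ≤ A := by
    calc r 1 ^ (1 + ε) ≤ R ^ (1 + ε) := Real.rpow_le_rpow hr10 hr1 (by linarith)
      _ = R ^ 2 * R ^ (ε - 1) := by
        rw [← Real.rpow_natCast, ← Real.rpow_add hR]; congr 1; push_cast; ring
      _ ≤ A := by
        rw [hA]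
        have := Real.rpow_le_rpow_of_nonpos hγ hγR (by linarith : ε - 1 ≤ 0)
        gcongr
  have hst : ∀ t : ℕ, 1 ≤ t → t < tc → r (t + 1) ^ (1 + ε) ≤
      r t ^ (1 + ε) + (1 + ε) * b + (1 + ε) / 2 * A * (t : ℝ) ^ (ε - 1) := by
    intro t ht htt
    have ht' : (0 : ℝ) < t := by exact_mod_cast ht
    have hl := hlow t htt.le
    have hgt : 0 < γ * t := by positivity
    have hl' := hlow (t + 1) htt
    have hz : 0 ≤ r (t + 1) := le_trans (by positivity) hl'
    have := step_aux (r t) (r (t + 1)) R b ε (by linarith) hz hb hε hε1 (hstep t ht htt)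
    have h2 := Real.rpow_le_rpow_of_nonpos hgt hl (by linarith : ε - 1 ≤ 0)
    rw [Real.mul_rpow hγ.le ht'.le] at h2
    have h3 := mul_le_mul_of_nonneg_left h2 (by positivity : 0 ≤ (1 + ε) / 2 * R ^ 2)
    have e : (1 + ε) / 2 * A * (t : ℝ) ^ (ε - 1)
      = (1 + ε) / 2 * R ^ 2 * (γ ^ (ε - 1) * (t : ℝ) ^ (ε - 1)) := by rw [hA]; ring
    linarith
  have hm : ∀ m : ℕ, 1 ≤ m → m + 1 ≤ tc → r (m + 1) ^ (1 + ε) ≤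
      (1 + ε) * b * (m + 1) + A * ((1 + ε) / (2 * ε)) * ((m : ℝ) ^ ε + ε) := by
    intro m hm
    induction m, hm using Nat.le_induction with
    | base =>
      intro h
      have := hst 1 le_rfl h
      simp only [Nat.cast_one, Real.one_rpow] at this ⊢
      have h2 : 1 + (1 + ε) / 2 ≤ (1 + ε) / (2 * ε) * (1 + ε) := by
        rw [div_mul_eq_mul_div, le_div_iff₀ (by positivity)]
        nlinarith
      have h3 := mul_le_mul_of_nonneg_left h2 hA0.le
      have : 0 < (1 + ε) * b := by positivity
      linarith
    | succ m hm ih =>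
      intro h
      have h1 := ih (by omega)
      have h2 := hst (m + 1) (by omega) h
      have h3 := pow_aux ((m + 1 : ℕ) : ℝ) ε (by push_cast; linarith [(Nat.cast_nonneg m : (0:ℝ) ≤ m)]) hε hε1
      have h4 := mul_le_mul_of_nonneg_left h3 (by positivity : 0 ≤ A * ((1 + ε) / (2 * ε)))
      have e : A * ((1 + ε) / (2 * ε)) * (ε * ((m + 1 : ℕ) : ℝ) ^ (ε - 1)) =
        (1 + ε) / 2 * A * ((m + 1 : ℕ) : ℝ) ^ (ε - 1) := by field_simp
      rw [e] at h4
      have e2 : ((m + 1 : ℕ) : ℝ) - 1 = m := by push_cast; ring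
      rw [e2] at h4
      push_cast at *
      linarith
  have hcoef : (1 + ε) ^ 2 / (2 * ε) = (1 + ε) / (2 * ε) * (1 + ε) := by ring
  obtain ⟨m, rfl⟩ : ∃ m, tc = m + 1 := ⟨tc - 1, by omega⟩
  rcases Nat.eq_zero_or_pos m with rfl | hmpos
  · simp only [zero_add, Nat.cast_one, Real.one_rpow]
    have h2 : 1 ≤ (1 + ε) ^ 2 / (2 * ε) := by
      rw [le_div_iff₀ (by positivity)]; nlinarith
    have h3 := mul_le_mul_of_nonneg_left h2 hA0.le
    have : 0 < (1 + ε) * b := by positivity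
    linarith
  · have h1 := hm m hmpos le_rfl
    have hm0 : (0 : ℝ) ≤ m := Nat.cast_nonneg m
    have h2 : (m : ℝ) ^ ε ≤ ((m + 1 : ℕ) : ℝ) ^ ε :=
      Real.rpow_le_rpow hm0 (by push_cast; linarith) hε.le
    have h3 : (1 : ℝ) ≤ ((m + 1 : ℕ) : ℝ) ^ ε :=
      Real.one_le_rpow (by push_cast; linarith) hε.le
    have h4 : (m : ℝ) ^ ε + ε ≤ (1 + ε) * ((m + 1 : ℕ) : ℝ) ^ ε := by nlinarith
    have h5 := mul_le_mul_of_nonneg_left h4 (by positivity : 0 ≤ A * ((1 + ε) / (2 * ε)))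
    rw [hcoef]
    push_cast at *
    linarith

/-- Bound on the final norm for `ε < 1`. -/
lemma final_aux (r T R b ε γ δ : ℝ) (hγ : 0 < γ) (hR : 0 < R) (hb : 0 < b)
    (hε : 0 < ε) (hε1 : ε < 1) (hδ : 0 < δ) (hT : 0 < T) (hl : γ * T ≤ r)
    (hg : r ^ (1 + ε) ≤ (1 + ε) * b * T +
      R ^ 2 * γ ^ (ε - 1) * ((1 + ε) ^ 2 / (2 * ε)) * T ^ ε)
    (hbge : ((1 + ε) ^ (3 * ε - 1) / (2 * ε * δ) ^ ε) * (γ / R) ^ (1 - ε) ≤ b / R ^ (1 + ε)) :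
    γ * r ^ ε ≤ b * (δ + 1 + ε) := by
  by_contra! hcon
  have hr : 0 < r := lt_of_lt_of_le (by positivity) hl
  set B := b / γ with hB
  have hB0 : 0 < B := by positivity
  have hbB : b = B * γ := by rw [hB]; field_simp
  set w := ((1 + ε) * B) ^ (1 / ε) with hw
  have hw0 : 0 < w := Real.rpow_pos_of_pos (by positivity) _
  have hwe : w ^ ε = (1 + ε) * B := by
    rw [hw, ← Real.rpow_mul (by positivity), one_div_mul_cancel hε.ne', Real.rpow_one]
  have hwr : w ≤ r := by
    refine (Real.rpow_le_rpow_iff hw0.le hr.le hε).1 ?_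
    rw [hwe]
    refine le_of_mul_le_mul_left ?_ hγ
    have : 0 < b * δ := by positivity
    calc γ * ((1 + ε) * B) = b * (1 + ε) := by rw [hbB]; ring
      _ ≤ _ := by linarith
  -- key consequence of the hypothesis
  have hkey : R ^ 2 * (1 + ε) ^ 3 ≤ w * (2 * ε * δ * γ) := by
    refine (Real.rpow_le_rpow_iff (by positivity) (by positivity) hε).1 ?_
    have p1 : 0 < (2 * ε * δ) ^ ε := Real.rpow_pos_of_pos (by positivity) _
    have p2 : 0 < R ^ (1 + ε) := Real.rpow_pos_of_pos hR _
    have p3 : 0 < R ^ (1 - ε) := Real.rpow_pos_of_pos hR _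
    have p4 : 0 < γ ^ (1 - ε) := Real.rpow_pos_of_pos hγ _
    rw [Real.div_rpow hγ.le hR.le, div_mul_div_comm, div_le_div_iff₀ (by positivity) p2] at hbge
    have q1 : R ^ (1 + ε) = (R ^ 2) ^ ε * R ^ (1 - ε) := by
      rw [← Real.rpow_natCast, ← Real.rpow_mul hR.le, ← Real.rpow_add hR]
      congr 1; push_cast; ring
    have q2 : γ = γ ^ ε * γ ^ (1 - ε) := by
      rw [← Real.rpow_add hγ]; simp
    have q3 : ((1 + ε) ^ 3) ^ ε = (1 + ε) ^ (3 * ε - 1) * (1 + ε) := by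
      rw [← Real.rpow_natCast, ← Real.rpow_mul (by positivity)]
      nth_rewrite 3 [← Real.rpow_one (1 + ε)]
      rw [← Real.rpow_add (by positivity)]
      congr 1; push_cast; ring
    rw [Real.mul_rpow (by positivity) (by positivity), Real.mul_rpow hw0.le (by positivity),
      Real.mul_rpow (by positivity) hγ.le, hwe, q3]
    rw [q1] at hbge
    have hbB' : b = B * (γ ^ ε * γ ^ (1 - ε)) := by rw [← q2]; exact hbB
    rw [hbB'] at hbge
    refine le_of_mul_le_mul_right ?_ (mul_pos p4 p3)
    have := mul_le_mul_of_nonneg_right hbge (by positivity : 0 ≤ 1 + ε)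
    linarith
  have hT' : T ≤ r / γ := by rw [le_div_iff₀ hγ]; linarith
  have hTe : T ^ ε ≤ r ^ ε / γ ^ ε := by
    rw [← Real.div_rpow hr.le hγ.le]; exact Real.rpow_le_rpow hT.le hT' hε.le
  have pγ : 0 < γ ^ ε := Real.rpow_pos_of_pos hγ _
  have pr : 0 < r ^ ε := Real.rpow_pos_of_pos hr _
  have pγ1 : 0 < γ ^ (ε - 1) := Real.rpow_pos_of_pos hγ _
  have hg2 : r ^ (1 + ε) ≤ (1 + ε) * b * (r / γ) +
      R ^ 2 * γ ^ (ε - 1) * ((1 + ε) ^ 2 / (2 * ε)) * (r ^ ε / γ ^ ε) := by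
    refine hg.trans ?_
    gcongr
  rw [Real.rpow_sub_one hγ.ne', Real.rpow_add hr, Real.rpow_one] at hg2
  have hg3 : γ * r ^ ε ≤ (1 + ε) * b + R ^ 2 * ((1 + ε) ^ 2 / (2 * ε)) * (r ^ ε / r) := by
    refine le_of_mul_le_mul_left ?_ (by positivity : 0 < r / γ)
    calc r / γ * (γ * r ^ ε) = r * r ^ ε := by field_simp
      _ ≤ _ := hg2
      _ = _ := by field_simp
  have h5 : r ^ ε / r ≤ (1 + ε) * B / w := by
    rw [← hwe, ← Real.rpow_sub_one hr.ne', ← Real.rpow_sub_one hw0.ne']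
    exact Real.rpow_le_rpow_of_nonpos hw0 hwr (by linarith)
  have h6 : R ^ 2 * ((1 + ε) ^ 2 / (2 * ε)) * ((1 + ε) * B / w) ≤ b * δ := by
    have e : R ^ 2 * ((1 + ε) ^ 2 / (2 * ε)) * ((1 + ε) * B / w)
      = (R ^ 2 * (1 + ε) ^ 3) * B / (2 * ε * w) := by field_simp
    rw [e, div_le_iff₀ (by positivity), hbB]
    have := mul_le_mul_of_nonneg_right hkey hB0.le
    linarith
  have h7 := mul_le_mul_of_nonneg_left h5
    (by positivity : 0 ≤ R ^ 2 * ((1 + ε) ^ 2 / (2 * ε)))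
  linarith

/-- Bound on the final norm for all `ε`. -/
lemma norm_aux (r : ℕ → ℝ) (R b ε γ δ : ℝ) (tc : ℕ) (hγ : 0 < γ) (hγR : γ ≤ R) (hb : 0 < b)
    (hε : 0 < ε) (hε1 : ε ≤ 1) (hδ : 0 < δ) (hr1 : r 1 ≤ R) (hlow : ∀ t ≤ tc, γ * t ≤ r t)
    (hstep : ∀ t, 1 ≤ t → t < tc → r (t + 1) ^ 2 ≤ r t ^ 2 + R ^ 2 + 2 * (b * r t ^ (1 - ε)))
    (htc : 1 ≤ tc)
    (hbge : ((1 + ε) ^ (3 * ε - 1 - (⌊ε⌋ : ℝ)) / (2 * ε * δ) ^ ε) *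
        (γ / R) ^ (1 - ε) ≤ b / R ^ (1 + ε)) :
    γ * r tc ^ ε ≤ b * (δ + 1 + ε) := by
  have hR : 0 < R := by linarith
  have hT : (0 : ℝ) < tc := by exact_mod_cast htc
  rcases hε1.lt_or_eq with h | rfl
  · have hf : ⌊ε⌋ = 0 := by rw [Int.floor_eq_zero_iff]; exact ⟨hε.le, h⟩
    rw [hf] at hbge
    simp only [Int.cast_zero, sub_zero] at hbge
    exact final_aux (r tc) tc R b ε γ δ hγ hR hb hε h hδ hT (hlow tc le_rfl)
      (growth_aux r R b ε γ tc hγ hγR hb hε hε1 hr1 hlow hstep htc) hbge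
  · have e1 : (3 * 1 - 1 - ((⌊(1:ℝ)⌋ : ℤ) : ℝ)) = 1 := by norm_num
    have e2 : R ^ ((1:ℝ) + 1) = R ^ 2 := by
      rw [← Real.rpow_natCast]; norm_num
    rw [e1, e2, Real.rpow_one, Real.rpow_one, sub_self, Real.rpow_zero, mul_one,
      div_le_div_iff₀ (by positivity) (by positivity)] at hbge
    have hm : ∀ m : ℕ, m + 1 ≤ tc → r (m + 1) ^ 2 ≤ (m + 1) * (R ^ 2 + 2 * b) := by
      intro m
      induction m with
      | zero =>
        intro _
        have : 0 ≤ r 1 := by have := hlow 1 htc; simp at this; linarith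
        have := pow_le_pow_left₀ this hr1 2
        simp
        linarith
      | succ m ih =>
        intro h
        have h1 := ih (by omega)
        have h2 := hstep (m + 1) (by omega) h
        rw [sub_self, Real.rpow_zero] at h2
        push_cast
        linarith
    have h1 := hm (tc - 1) (by omega)
    rw [Nat.sub_add_cancel htc, ← Nat.cast_add_one, Nat.sub_add_cancel htc] at h1
    have h2 := hlow tc le_rfl
    rw [Real.rpow_one]
    have hr : 0 < r tc := lt_of_lt_of_le (by positivity) h2
    have h3 := mul_le_mul_of_nonneg_right h2 hr.le
    have h4 : γ * r tc ≤ R ^ 2 + 2 * b := by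
      refine le_of_mul_le_mul_left ?_ hT
      nlinarith
    linarith

/-- if b/R^(1+ε) ≥ ((1+ε)^(3ε−1−⌊ε⌋)/(2εδ)^ε)·(γ_d/R)^(1−ε), a converged
ℓ-margitron run with 0 < ε ≤ 1 achieves γ'_d/γ_d ≥ (δ + 1 + ε)⁻¹. -/
theorem stmt14 {E : Type*} [NormedAddCommGroup E] [InnerProductSpace ℝ E]
    {n : ℕ} (hn : 0 < n) (y : Fin n → E)
    (R : ℝ) (hR : IsGreatest (Set.range (fun k : Fin n => ‖y k‖)) R)
    (u : E) (hu : ‖u‖ = 1) (γd : ℝ) (hγd : 0 < γd)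
    (hmargin : ∀ k : Fin n, γd ≤ ⟪u, y k⟫)
    (ε b δ : ℝ) (hε : 0 < ε) (hε1 : ε ≤ 1) (hb : 0 < b) (hδ : 0 < δ)
    (hbge : ((1 + ε) ^ (3 * ε - 1 - (⌊ε⌋ : ℝ)) / (2 * ε * δ) ^ ε) *
        (γd / R) ^ (1 - ε) ≤ b / R ^ (1 + ε))
    (tc : ℕ) (htc : 1 ≤ tc) (a : ℕ → E) (ha0 : a 0 = 0)
    (hrun : ∀ t : ℕ, t < tc → ∃ k : Fin n, a (t + 1) = a t + y k ∧
      ⟪a t, y k⟫ ≤ if t = 0 then 0 else b * ‖a t‖ ^ (1 - ε))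
    (hconv : ∀ k : Fin n, b * ‖a tc‖ ^ (1 - ε) < ⟪a tc, y k⟫) :
    (Finset.univ.inf' (Finset.univ_nonempty_iff.mpr ⟨⟨0, hn⟩⟩)
        (fun k : Fin n => ⟪(‖a tc‖)⁻¹ • a tc, y k⟫)) / γd ≥
      (δ + 1 + ε)⁻¹ := by
  obtain ⟨⟨k0, hk0⟩, hRub⟩ := hR
  have hyR : ∀ k, ‖y k‖ ≤ R := fun k => hRub ⟨k, rfl⟩
  have hγR : γd ≤ R := by
    have h1 := hmargin k0
    have h2 := real_inner_le_norm u (y k0)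
    rw [hu, one_mul] at h2
    exact h1.trans (h2.trans (hyR k0))
  have hlow : ∀ t ≤ tc, γd * (t : ℝ) ≤ ⟪u, a t⟫ := by
    intro t
    induction t with
    | zero => intro _; simp [ha0]
    | succ t ih =>
      intro h
      obtain ⟨k, hk, _⟩ := hrun t h
      rw [hk, inner_add_right]
      have := ih (by omega)
      have := hmargin k
      push_cast
      linarith
  have hlow' : ∀ t ≤ tc, γd * (t : ℝ) ≤ ‖a t‖ := by
    intro t ht
    have h2 := real_inner_le_norm u (a t)
    rw [hu, one_mul] at h2
    exact (hlow t ht).trans h2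
  have hr1 : ‖a 1‖ ≤ R := by
    obtain ⟨k, hk, _⟩ := hrun 0 htc
    rw [zero_add, ha0, zero_add] at hk
    rw [hk]; exact hyR k
  have hstep : ∀ t, 1 ≤ t → t < tc →
      ‖a (t + 1)‖ ^ 2 ≤ ‖a t‖ ^ 2 + R ^ 2 + 2 * (b * ‖a t‖ ^ (1 - ε)) := by
    intro t ht htt
    obtain ⟨k, hk, hin⟩ := hrun t htt
    rw [if_neg (by omega)] at hin
    rw [hk, norm_add_sq_real]
    have := pow_le_pow_left₀ (norm_nonneg _) (hyR k) 2
    linarith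
  have hmain := norm_aux (fun t => ‖a t‖) R b ε γd δ tc hγd hγR hb hε hε1 hδ hr1 hlow' hstep
    htc hbge
  have hT : (0 : ℝ) < tc := by exact_mod_cast htc
  have hr : 0 < ‖a tc‖ := lt_of_lt_of_le (by positivity) (hlow' tc le_rfl)
  rw [ge_iff_le, le_div_iff₀ hγd]
  apply Finset.le_inf'
  intro k _
  rw [real_inner_smul_left]
  have hc := hconv k
  have pr : 0 < ‖a tc‖ ^ ε := Real.rpow_pos_of_pos hr _
  have e : ‖a tc‖ ^ (1 - ε) = ‖a tc‖ / ‖a tc‖ ^ ε := by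
    rw [Real.rpow_sub hr, Real.rpow_one]
  rw [e] at hc
  have h1 : (δ + 1 + ε)⁻¹ * γd ≤ b / ‖a tc‖ ^ ε := by
    rw [inv_mul_eq_div, div_le_div_iff₀ (by positivity) pr]
    exact hmain
  refine h1.trans ?_
  rw [inv_mul_eq_div, le_div_iff₀ hr]
  calc b / ‖a tc‖ ^ ε * ‖a tc‖ = b * (‖a tc‖ / ‖a tc‖ ^ ε) := by ring
    _ ≤ _ := hc.le
end
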